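/- arXiv:2605.24637 — 4 statements merged into one kernel-verified Lean document; each statement's English description precedes it below -/
import Mathlib

section
/- Let p, q, r, s be positive integers with p < r and s < q. Suppose λ is a partition with at most q+s−1 nonzero parts such that λ_i = p for all i with s+1 ≤ i ≤ q−1, λ_s ≥ max(p, r−1), and λ_i + λ_{q+s−i} = p+r−1 for all i with 1 ≤ i ≤ s. Then [(r)^s] ⊆ [λ] or [(p)^q] ⊆ [λ]. -/
/-!
Only the row `s` matters. If `λ_s ≥ r`, monotonicity makes the first `s` rows at least `r` long,
so `[(r)^s] ⊆ [λ]`.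
Otherwise `λ_s ≤ r - 1`, and the pairing condition at `i = s`, which reads
`λ_s + λ_q = p + r - 1`, gives `λ_q ≥ p`, so the first `q` rows are at least `p` long.
-/

/-- A partition, encoded as a function `f : ℕ → ℕ` where `f i` is the `i`-th part `λ_i`
(1-indexed): the parts are weakly decreasing, eventually zero, and the irrelevant
0-th entry is set to `0`. -/
def IsPartition (f : ℕ → ℕ) : Prop :=
  f 0 = 0 ∧ (∀ i j, 1 ≤ i → i ≤ j → f j ≤ f i) ∧ ∃ N, ∀ i, N ≤ i → f i = 0

/-- Membership of the cell `(i,j)` (with `i, j` positive) in the Young diagram `[f]`. -/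
def YoungMem (f : ℕ → ℕ) (i j : ℕ) : Prop := 1 ≤ i ∧ 1 ≤ j ∧ j ≤ f i

/-- Young-diagram containment `[g] ⊆ [f]`. -/
def YoungSubset (g f : ℕ → ℕ) : Prop := ∀ i j, YoungMem g i j → YoungMem f i j

/-- The rectangular partition `(p)^q`: exactly `q` nonzero parts, all equal to `p`. -/
def rectPartition (p q : ℕ) : ℕ → ℕ := fun i => if 1 ≤ i ∧ i ≤ q then p else 0

/-- Since the parts decrease, a rectangle is contained in a partition as soon as its last row is. -/
theorem rect_youngSubset_of_le {f : ℕ → ℕ} (hf : IsPartition f) {a b : ℕ} (h : a ≤ f b) :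
    YoungSubset (rectPartition a b) f := by
  rintro i j ⟨hi, hj, hij⟩
  refine ⟨hi, hj, ?_⟩
  by_cases hib : i ≤ b
  · have hmono := hf.2.1 i b hi hib
    simp only [rectPartition, hi, hib, and_self, if_true] at hij
    omega
  · simp only [rectPartition, hib, and_false, if_false] at hij
    omega

/-- Let p, q, r, s be positive integers with p < r and s < q.  Suppose λ
is a partition with at most q+s−1 nonzero parts such that λ_i = p for all i with
s+1 ≤ i ≤ q−1, λ_s ≥ max(p, r−1), and λ_i + λ_{q+s−i} = p+r−1 for all 1 ≤ i ≤ s.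
Then [(r)^s] ⊆ [λ] or [(p)^q] ⊆ [λ]. -/
theorem rect_subset_of_LR_constituent (p q r s : ℕ)
    (hp : 0 < p) (hq : 0 < q) (hr : 0 < r) (hs : 0 < s)
    (hpr : p < r) (hsq : s < q) (lam : ℕ → ℕ) (hlam : IsPartition lam)
    (hlen : ∀ i, q + s - 1 < i → lam i = 0)
    (hmid : ∀ i, s + 1 ≤ i → i ≤ q - 1 → lam i = p)
    (hls : max p (r - 1) ≤ lam s)
    (hpair : ∀ i, 1 ≤ i → i ≤ s → lam i + lam (q + s - i) = p + r - 1) :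
    YoungSubset (rectPartition r s) lam ∨ YoungSubset (rectPartition p q) lam := by
  by_cases h : r ≤ lam s
  · exact Or.inl (rect_youngSubset_of_le hlam h)
  · right
    apply rect_youngSubset_of_le hlam
    have hpair_s := hpair s hs le_rfl
    rw [Nat.add_sub_cancel] at hpair_s
    omega
end

section
/- Let R be a commutative ring, x an element of R, and m_1, …, m_k elements of R such that m_i − m_j is a unit whenever i ≠ j. If the product ∏_{i=1}^{k} (x − m_i) is nilpotent, then there exist idempotents e_1, …, e_k in R with e_i · e_j = 0 for all i ≠ j, e_1 + … + e_k = 1, and (x − m_i) · e_i nilpotent for each i. -/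
/-! The powers `(x - m i) ^ (n + 1)` are still pairwise coprime, and for `n` large their product
vanishes. A Bézout relation `∑ i, c i * ∏ j ≠ i, (x - m j) ^ (n + 1) = 1` then has as summands
elements `e i` whose pairwise products, and products with `(x - m i) ^ (n + 1)`, are multiples of
the full product, hence zero. Orthogonal elements summing to `1` are idempotent. -/

/-- Let R be a commutative ring, x ∈ R, and m_1, …, m_k ∈ R with m_i − m_j
a unit whenever i ≠ j.  If ∏_{i=1}^{k} (x − m_i) is nilpotent, then there exist
idempotents e_1, …, e_k in R with e_i·e_j = 0 for i ≠ j, e_1 + … + e_k = 1, and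
(x − m_i)·e_i nilpotent for each i. -/
theorem exists_idempotent_splitting {R : Type*} [CommRing R] (k : ℕ) (x : R)
    (m : Fin k → R) (hunit : ∀ i j, i ≠ j → IsUnit (m i - m j))
    (hnil : IsNilpotent (∏ i, (x - m i))) :
    ∃ e : Fin k → R, (∀ i, IsIdempotentElem (e i)) ∧
      (∀ i j, i ≠ j → e i * e j = 0) ∧ (∑ i, e i) = 1 ∧
      ∀ i, IsNilpotent ((x - m i) * e i) := by
  classical
  obtain ⟨n, hn⟩ := hnil
  have hprod : ∏ i, (x - m i) ^ (n + 1) = 0 := by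
    rw [Finset.prod_pow, pow_succ, hn, zero_mul]
  rcases isEmpty_or_nonempty (Fin k) with hk | hk
  -- With no factors, the vanishing of the empty product makes `R` trivial.
  · have h10 : (1 : R) = 0 := by simpa using hprod
    exact ⟨fun _ => 0, isEmptyElim, isEmptyElim, by simp [h10], isEmptyElim⟩
  have hcop : Pairwise (Function.onFun IsCoprime fun i => (x - m i) ^ (n + 1)) := by
    intro i j hij
    apply IsCoprime.pow
    obtain ⟨u, hu⟩ := hunit i j hij
    refine ⟨-↑u⁻¹, ↑u⁻¹, ?_⟩
    linear_combination (↑u⁻¹ : R) * -hu + u.inv_mul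
  obtain ⟨c, hc⟩ := exists_sum_eq_one_iff_pairwise_coprime'.mpr hcop
  set e : Fin k → R := fun i => c i * ∏ j ∈ {i}ᶜ, (x - m j) ^ (n + 1) with he
  have hann : ∀ i, (x - m i) ^ (n + 1) * e i = 0 := by
    intro i
    have h := Fintype.prod_eq_mul_prod_compl i fun j => (x - m j) ^ (n + 1)
    rw [hprod] at h
    simp only [he]
    linear_combination -c i * h
  have horth : ∀ i j, i ≠ j → e i * e j = 0 := by
    intro i j hij
    obtain ⟨d, hd⟩ : (x - m j) ^ (n + 1) ∣ e i :=
      (Finset.dvd_prod_of_mem _ (by simpa using hij.symm)).mul_left _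
    rw [hd]
    linear_combination d * hann j
  have hcomplete : CompleteOrthogonalIdempotents e :=
    CompleteOrthogonalIdempotents.iff_ortho_complete.mpr ⟨fun i j hij => horth i j hij, hc⟩
  refine ⟨e, hcomplete.idem, horth, hc, fun i => ⟨n + 1, ?_⟩⟩
  rw [mul_pow, pow_succ' (e i), ← mul_assoc, hann, zero_mul]
end

section
/- Let P be a nonempty set of nonempty partitions that is upward closed under Young diagram containment and rectangle-prime. Then there is a unique rectangular partition in P that is minimal, with respect to Young diagram inclusion, among all rectangular partitions belonging to P. -/
/-- An LR-constituent of the pair of rectangles `(p)^q`, `(r)^s` (with `q ≥ s`):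
a partition of `pq + rs` with at most `q+s` nonzero parts such that `λ_i = p` for
`s+1 ≤ i ≤ q`, `λ_s ≥ max(p,r)`, and `λ_i + λ_{q+s-i+1} = p + r` for `1 ≤ i ≤ s`. -/
def LRConstituent (p q r s : ℕ) (f : ℕ → ℕ) : Prop :=
  IsPartition f ∧ (∑ᶠ i, f i) = p * q + r * s ∧
    (∀ i, q + s < i → f i = 0) ∧
    (∀ i, s + 1 ≤ i → i ≤ q → f i = p) ∧
    max p r ≤ f s ∧
    ∀ i, 1 ≤ i → i ≤ s → f i + f (q + s - i + 1) = p + r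

/-- A set of partitions is rectangle-prime if for every pair of rectangular partitions
`(p)^q`, `(r)^s` with `q ≥ s`, whenever every LR-constituent of the pair lies in `P`,
then `(p)^q ∈ P` or `(r)^s ∈ P`. -/
def RectanglePrime (P : Set (ℕ → ℕ)) : Prop :=
  ∀ p q r s : ℕ, 0 < p → 0 < q → 0 < r → 0 < s → s ≤ q →
    (∀ f, LRConstituent p q r s f → f ∈ P) →
    rectPartition p q ∈ P ∨ rectPartition r s ∈ P

/-- A rectangular partition. -/
def IsRect (f : ℕ → ℕ) : Prop := ∃ p q, 0 < p ∧ 0 < q ∧ f = rectPartition p q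

theorem isPartition_rect (p q : ℕ) : IsPartition (rectPartition p q) := by
  refine ⟨by simp [rectPartition], ?_, q + 1, ?_⟩
  · intro i j hi hij
    unfold rectPartition
    split_ifs <;> omega
  · intro i hi
    unfold rectPartition
    split_ifs <;> omega

theorem rect_subset {p q : ℕ} {f : ℕ → ℕ} (hf : IsPartition f) (h : p ≤ f q) :
    YoungSubset (rectPartition p q) f := by
  rintro i j ⟨hi, hj, hij⟩
  refine ⟨hi, hj, ?_⟩
  unfold rectPartition at hij
  split_ifs at hij with hq
  · exact hij.trans (h.trans (hf.2.1 i q hi hq.2))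
  · omega

theorem rect_subset_rect {p q p' q' : ℕ} (hp : p ≤ p') (hq : q ≤ q') :
    YoungSubset (rectPartition p q) (rectPartition p' q') := by
  rintro i j ⟨hi, hj, hij⟩
  refine ⟨hi, hj, ?_⟩
  unfold rectPartition at hij ⊢
  split_ifs at hij ⊢ <;> omega

theorem le_of_rect_subset {p q p' q' : ℕ} (hp : 0 < p) (hq : 0 < q)
    (h : YoungSubset (rectPartition p q) (rectPartition p' q')) : p ≤ p' ∧ q ≤ q' := by
  have h' := (h q p ⟨hq, hp, by simp [rectPartition, Nat.one_le_iff_ne_zero.mpr hq.ne']⟩).2.2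
  unfold rectPartition at h'
  split_ifs at h' <;> omega

/-- If removing the last row of `(a)^(n+1) ∈ P` leaves `P`, then `P` contains no rectangle with
`n` rows. -/
theorem rect_notMem_of_notMem {P : Set (ℕ → ℕ)}
    (hpart : ∀ f ∈ P, IsPartition f ∧ f 1 ≠ 0)
    (hup : ∀ f ∈ P, ∀ g, IsPartition g → YoungSubset f g → g ∈ P)
    (hprime : RectanglePrime P) {a n : ℕ} (ha : 0 < a) (hn : 0 < n)
    (hin : rectPartition a (n + 1) ∈ P) (hout : rectPartition a n ∉ P) (c : ℕ) :
    rectPartition c n ∉ P := by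
  induction c with
  | zero => exact fun h => (hpart _ h).2 (by simp [rectPartition])
  | succ c ih =>
    intro hc
    by_cases hca : c + 1 ≤ a
    · exact hout (hup _ hc _ (isPartition_rect _ _) (rect_subset_rect hca le_rfl))
    refine (hprime c n a n (by omega) hn ha hn le_rfl ?_).elim ih hout
    rintro f ⟨hf, -, -, -, hmax, hsum⟩
    by_cases hfn : c + 1 ≤ f n
    · exact hup _ hc _ hf (rect_subset hf hfn)
    -- here `f n = c`, and its complementary row is `f (n + n - n + 1) = f (n + 1)`
    · have h1 := hsum n hn le_rfl
      rw [Nat.add_sub_cancel] at h1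
      have h2 := (le_max_left c a).trans hmax
      exact hup _ hin _ hf (rect_subset hf (by omega))

/-- Let P be a nonempty set of nonempty partitions, upward closed under
Young diagram containment and rectangle-prime.  Then there is a unique rectangular
partition in P that is minimal, with respect to Young diagram inclusion, among all
rectangular partitions belonging to P. -/
theorem exists_unique_minimal_rectangle (P : Set (ℕ → ℕ)) (hne : P.Nonempty)
    (hpart : ∀ f ∈ P, IsPartition f ∧ f 1 ≠ 0)
    (hup : ∀ f ∈ P, ∀ g, IsPartition g → YoungSubset f g → g ∈ P)
    (hprime : RectanglePrime P) :
    ∃! m, IsRect m ∧ m ∈ P ∧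
      ∀ m', IsRect m' → m' ∈ P → YoungSubset m' m → m' = m := by
  classical
  have hex : ∃ q, ∃ p, 0 < p ∧ 0 < q ∧ rectPartition p q ∈ P := by
    obtain ⟨f, hf⟩ := hne
    obtain ⟨⟨h0, hmono, N, hN⟩, h1⟩ := hpart f hf
    refine ⟨N + 1, f 1, by omega, by omega, hup f hf _ (isPartition_rect _ _) ?_⟩
    rintro i j ⟨hi, hj, hij⟩
    refine ⟨hi, hj, ?_⟩
    have hiN : i < N := by
      by_contra h
      have := hN i (by omega)
      omega
    have := hmono 1 i le_rfl hi
    unfold rectPartition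
    split_ifs <;> omega
  have hq := Nat.find_spec hex
  have hqmin := fun q => Nat.find_min' hex (m := q)
  generalize Nat.find hex = q at hq hqmin
  have hp := Nat.find_spec hq
  have hpmin := fun p => Nat.find_min' hq (m := p)
  generalize Nat.find hq = p at hp hpmin
  obtain ⟨hp0, hq0, hpq⟩ := hp
  refine ⟨rectPartition p q, ⟨⟨p, q, hp0, hq0, rfl⟩, hpq, ?_⟩, ?_⟩
  · rintro _ ⟨p', q', hp', hq', rfl⟩ hm hsub
    obtain ⟨h1, h2⟩ := le_of_rect_subset hp' hq' hsub
    obtain rfl := le_antisymm h2 (hqmin q' ⟨p', hp', hq', hm⟩)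
    rw [le_antisymm h1 (hpmin p' ⟨hp', hq', hm⟩)]
  · rintro _ ⟨⟨p', q', hp', hq', rfl⟩, hm, hmin⟩
    obtain rfl | hlt := (hqmin q' ⟨p', hp', hq', hm⟩).eq_or_lt
    · exact (hmin _ ⟨p, q, hp0, hq0, rfl⟩ hpq
        (rect_subset_rect (hpmin p' ⟨hp', hq', hm⟩) le_rfl)).symm
    · exfalso
      obtain ⟨n, rfl⟩ : ∃ n, q' = n + 1 := ⟨q' - 1, by omega⟩
      have hn : 0 < n := by omega
      refine rect_notMem_of_notMem hpart hup hprime hp' hn hm (fun h => ?_) p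
        (hup _ hpq _ (isPartition_rect _ _) (rect_subset_rect le_rfl (by omega)))
      have heq := hmin _ ⟨p', n, hp', hn, rfl⟩ h (rect_subset_rect le_rfl (by omega))
      have := le_of_rect_subset hp' hq' (heq ▸ fun _ _ h => h :
        YoungSubset (rectPartition p' (n + 1)) (rectPartition p' n))
      omega
end

section
/- Let P be a nonempty set of nonempty partitions that is upward closed under Young diagram containment and rectangle-prime. Then there exist positive integers p and q such that P = { λ : [(p)^q] ⊆ [λ] }, i.e. P consists exactly of the partitions whose Young diagram contains the rectangle with q rows of length p. (This is the combinatorial classification of the nonzero prime thick tensor ideals of the non-rigid tt-affine line, whose simple objects are the Schur functors applied to the free object, indexed by partitions.) -/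
theorem subset_of_le {f g : ℕ → ℕ} (h : ∀ i, 1 ≤ i → f i ≤ g i) : YoungSubset f g :=
  fun i _ hij => ⟨hij.1, hij.2.1, hij.2.2.trans (h i hij.1)⟩

section Prime

variable {P : Set (ℕ → ℕ)}

/-- If `P` contains both rectangles obtained from `(k)^l` by adding a column or a row, then it
contains `(k)^l`: a constituent `f` of its square has `f l ≥ k` and `f l + f (l + 1) = 2 k`. -/
theorem square_step (hup : ∀ f ∈ P, ∀ g, IsPartition g → YoungSubset f g → g ∈ P)
    (hprime : RectanglePrime P) {k l : ℕ} (hk : 0 < k) (hl : 0 < l)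
    (h1 : rectPartition (k + 1) l ∈ P) (h2 : rectPartition k (l + 1) ∈ P) :
    rectPartition k l ∈ P := by
  refine (hprime k l k l hk hl hk hl le_rfl ?_).elim id id
  rintro f ⟨hf, -, -, -, hmax, hsum⟩
  have h := hsum l hl le_rfl
  rw [show l + l - l + 1 = l + 1 by omega] at h
  simp only [max_self] at hmax
  by_cases hc : k + 1 ≤ f l
  · exact hup _ h1 f hf (rect_subset hf hc)
  · exact hup _ h2 f hf (rect_subset hf (by omega))

theorem corner_mem (hup : ∀ f ∈ P, ∀ g, IsPartition g → YoungSubset f g → g ∈ P)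
    (hprime : RectanglePrime P) {a b m n : ℕ} (hm : 0 < m) (hn : 0 < n)
    (h1 : rectPartition m b ∈ P) (h2 : rectPartition a n ∈ P) :
    rectPartition m n ∈ P := by
  suffices H : ∀ d k l, m ≤ k → n ≤ l → (a - k) + (b - l) ≤ d → rectPartition k l ∈ P from
    H _ m n le_rfl le_rfl le_rfl
  intro d
  have base : ∀ k l, m ≤ k → n ≤ l → a ≤ k ∨ b ≤ l → rectPartition k l ∈ P := by
    intro k l hk hl hab
    rcases hab with hak | hbl
    · refine hup _ h2 _ (isPartition_rect k l) (subset_of_le fun i hi => ?_)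
      simp only [rectPartition]
      split_ifs <;> omega
    · refine hup _ h1 _ (isPartition_rect k l) (subset_of_le fun i hi => ?_)
      simp only [rectPartition]
      split_ifs <;> omega
  induction d with
  | zero =>
    intro k l hk hl hd
    exact base k l hk hl (by omega)
  | succ d ih =>
    intro k l hk hl hd
    by_cases hab : a ≤ k ∨ b ≤ l
    · exact base k l hk hl hab
    · exact square_step hup hprime (by omega) (by omega)
        (ih (k + 1) l (by omega) hl (by omega)) (ih k (l + 1) hk (by omega) (by omega))

/-- If `f ∈ P` omits the cell `(n + 1, m + 1)`, hence lies in the fat hook with `n` rows and `m`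
columns, then `P` contains one of the (sufficiently long) rectangles forming the hook. -/
theorem fatHook_mem_or (hpart : ∀ f ∈ P, IsPartition f ∧ f 1 ≠ 0)
    (hup : ∀ f ∈ P, ∀ g, IsPartition g → YoungSubset f g → g ∈ P)
    (hprime : RectanglePrime P) {f : ℕ → ℕ} (hf : f ∈ P) {m n : ℕ} (h : f (n + 1) ≤ m) :
    (0 < m ∧ ∃ b, 0 < b ∧ rectPartition m b ∈ P) ∨
      (0 < n ∧ ∃ a, 0 < a ∧ rectPartition a n ∈ P) := by
  obtain ⟨hfp, hf1⟩ := hpart f hf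
  obtain ⟨-, hanti, N, hN⟩ := hfp
  have hpos : 0 < f 1 := Nat.pos_of_ne_zero hf1
  rcases Nat.eq_zero_or_pos n with rfl | hn
  · refine Or.inl ⟨by simp at h; omega, N + 1, by omega, hup f hf _ (isPartition_rect _ _)
      (subset_of_le fun i hi => ?_)⟩
    have := hanti 1 i le_rfl hi
    simp only [rectPartition]
    split_ifs
    · simp at h; omega
    · rw [hN i (by omega)]
  rcases Nat.eq_zero_or_pos m with rfl | hm
  · refine Or.inr ⟨hn, f 1, hpos, hup f hf _ (isPartition_rect _ _)
      (subset_of_le fun i hi => ?_)⟩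
    simp only [rectPartition]
    split_ifs
    · exact hanti 1 i le_rfl hi
    · have := hanti (n + 1) i (by omega) (by omega)
      omega
  have key := hprime m (N + n) (f 1) n hm (by omega) hpos hn (by omega) ?_
  · exact key.imp (fun h => ⟨hm, _, by omega, h⟩) (fun h => ⟨hn, _, hpos, h⟩)
  · rintro g ⟨hg, -, -, hmid, hmax, -⟩
    refine hup f hf g hg (subset_of_le fun i hi => ?_)
    by_cases hin : i ≤ n
    · exact (hanti 1 i le_rfl hi).trans ((le_max_right _ _).trans (hmax.trans (hg.2.1 i n hi hin)))
    by_cases hiN : i ≤ N + n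
    · rw [hmid i (by omega) hiN]
      exact (hanti (n + 1) i (by omega) (by omega)).trans h
    · rw [hN i (by omega)]
      exact Nat.zero_le _

theorem rect_le_of_mem (hpart : ∀ f ∈ P, IsPartition f ∧ f 1 ≠ 0)
    (hup : ∀ f ∈ P, ∀ g, IsPartition g → YoungSubset f g → g ∈ P)
    (hprime : RectanglePrime P) {m n : ℕ} (hn : 0 < n)
    (hmin : ∀ m' < m, ¬ (0 < m' ∧ ∃ b, 0 < b ∧ rectPartition m' b ∈ P))
    (hnmin : ∀ n' < n, ¬ (0 < n' ∧ ∃ a, 0 < a ∧ rectPartition a n' ∈ P))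
    {f : ℕ → ℕ} (hf : f ∈ P) : m ≤ f n := by
  by_contra! hlt
  rcases fatHook_mem_or hpart hup hprime hf (m := m - 1) (n := n - 1)
    (by rw [show n - 1 + 1 = n by omega]; omega) with h | h
  · exact hmin _ (by omega) h
  · exact hnmin _ (by omega) h

end Prime

/-- Let P be a nonempty set of nonempty partitions, upward closed under
Young diagram containment and rectangle-prime.  Then there exist positive integers p
and q with P = { λ : λ a partition with [(p)^q] ⊆ [λ] }. -/
theorem prime_eq_rectangle_filter (P : Set (ℕ → ℕ)) (hne : P.Nonempty)
    (hpart : ∀ f ∈ P, IsPartition f ∧ f 1 ≠ 0)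
    (hup : ∀ f ∈ P, ∀ g, IsPartition g → YoungSubset f g → g ∈ P)
    (hprime : RectanglePrime P) :
    ∃ p q : ℕ, 0 < p ∧ 0 < q ∧
      P = {f : ℕ → ℕ | IsPartition f ∧ YoungSubset (rectPartition p q) f} := by
  classical
  obtain ⟨f₀, hf₀⟩ := hne
  -- Any element of `P` omits some far-away cell, which yields a rectangle in `P`.
  have hrect : ∃ p q, 0 < p ∧ 0 < q ∧ rectPartition p q ∈ P := by
    rcases fatHook_mem_or hpart hup hprime hf₀ (m := f₀ 1) (n := 0) le_rfl with h | h
    · obtain ⟨hp, q, hq, h⟩ := h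
      exact ⟨_, q, hp, hq, h⟩
    · exact absurd h.1 (lt_irrefl 0)
  obtain ⟨p, q, hp, hq, hpq⟩ := hrect
  have hM : ∃ m, 0 < m ∧ ∃ b, 0 < b ∧ rectPartition m b ∈ P := ⟨p, hp, q, hq, hpq⟩
  have hN : ∃ n, 0 < n ∧ ∃ a, 0 < a ∧ rectPartition a n ∈ P := ⟨q, hq, p, hp, hpq⟩
  obtain ⟨hm, b, -, hb⟩ := Nat.find_spec hM
  obtain ⟨hn, a, -, ha⟩ := Nat.find_spec hN
  refine ⟨Nat.find hM, Nat.find hN, hm, hn, Set.ext fun f => ⟨fun hf => ?_, fun hf => ?_⟩⟩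
  · exact ⟨(hpart f hf).1, rect_subset (hpart f hf).1
      (rect_le_of_mem hpart hup hprime hn (fun _ => Nat.find_min hM) (fun _ => Nat.find_min hN) hf)⟩
  · exact hup _ (corner_mem hup hprime hm hn hb ha) f hf.1 hf.2
end
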